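/- Every cyclic subgroup of Ree(q) of order q − 1 is conjugate in Ree(q) to H(q). -/

import Mathlib

/-!
Following Wilson, `Ree(q)` is viewed as acting on the trace-zero split octonions. It preserves the
cross product and, up to the Tits endomorphism `σ` (a square root of the Frobenius map `x ↦ x ^ 3`),
a twisted product defined on pairs of vectors with zero cross product. The points `⟨v⟩` for which
`σ v` is a twisted product with `v` form an ovoid of `q ^ 3 + 1` points, on which `Ree(q)` acts
doubly transitively, and the stabiliser of two points is conjugate to `H(q)`.

As `(q - 1) / 2` is prime to 6 and greater than 1, a group `C` of order `q - 1` contains an element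
`c` of prime order `r ≥ 5`. Since `q ^ 3 + 1 ≡ 2` modulo `r`, the element `c` fixes two points of
the ovoid, and after conjugation these are the axes spanned by the first and last basis vectors.
Then `c` is diagonal and its first and last eigenvalues are simple, so everything commuting with `c`
fixes both axes too. When `C` is commutative, this places a conjugate of `C` in `H(q)`, and the two
have the same order.
-/

open Matrix

noncomputable section

namespace ReePaper

variable {F : Type*} [Field F] [Fintype F]

/-- The matrix `α(x)`. -/
def amat (t : ℕ) (x : F) : Matrix (Fin 7) (Fin 7) F :=
  !![1, x^t, 0, 0, -x^(3*t+1), -x^(3*t+2), x^(4*t+2);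
     0, 1, x, x^(t+1), -x^(2*t+1), 0, -x^(3*t+2);
     0, 0, 1, x^t, -x^(2*t), 0, x^(3*t+1);
     0, 0, 0, 1, x^t, 0, 0;
     0, 0, 0, 0, 1, -x, x^(t+1);
     0, 0, 0, 0, 0, 1, -x^t;
     0, 0, 0, 0, 0, 0, 1]

/-- The matrix `β(x)`. -/
def bmat (t : ℕ) (x : F) : Matrix (Fin 7) (Fin 7) F :=
  !![1, 0, -x^t, 0, -x, 0, -x^(t+1);
     0, 1, 0, x^t, 0, -x^(2*t), 0;
     0, 0, 1, 0, 0, 0, x;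
     0, 0, 0, 1, 0, x^t, 0;
     0, 0, 0, 0, 1, 0, x^t;
     0, 0, 0, 0, 0, 1, 0;
     0, 0, 0, 0, 0, 0, 1]

/-- The matrix `γ(x)`. -/
def cmat (t : ℕ) (x : F) : Matrix (Fin 7) (Fin 7) F :=
  !![1, 0, 0, -x^t, 0, -x, -x^(2*t);
     0, 1, 0, 0, -x^t, 0, x;
     0, 0, 1, 0, 0, x^t, 0;
     0, 0, 0, 1, 0, 0, -x^t;
     0, 0, 0, 0, 1, 0, 0;
     0, 0, 0, 0, 0, 1, 0;
     0, 0, 0, 0, 0, 0, 1]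

/-- The diagonal matrix `h(λ)`. -/
def hmat (t : ℕ) (l : Fˣ) : Matrix (Fin 7) (Fin 7) F :=
  Matrix.diagonal ![((l ^ (t : ℤ) : Fˣ) : F), ((l ^ (1 - (t : ℤ)) : Fˣ) : F),
    ((l ^ (2 * (t : ℤ) - 1) : Fˣ) : F), 1, ((l ^ (1 - 2 * (t : ℤ)) : Fˣ) : F),
    ((l ^ ((t : ℤ) - 1) : Fˣ) : F), ((l ^ (-(t : ℤ)) : Fˣ) : F)]

/-- The matrix `Υ`, the antidiagonal matrix with all entries `-1`. -/
def ups : Matrix (Fin 7) (Fin 7) F :=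
  !![0, 0, 0, 0, 0, 0, -1;
     0, 0, 0, 0, 0, -1, 0;
     0, 0, 0, 0, -1, 0, 0;
     0, 0, 0, -1, 0, 0, 0;
     0, 0, -1, 0, 0, 0, 0;
     0, -1, 0, 0, 0, 0, 0;
     -1, 0, 0, 0, 0, 0, 0]

/-- `S(a, b, c) = α(a) β(b) γ(c)`. -/
def Smat (t : ℕ) (a b c : F) : Matrix (Fin 7) (Fin 7) F :=
  amat t a * bmat t b * cmat t c

/-- The Ree group `Ree(q) = ⟨α(x), β(x), γ(x), h(λ), Υ⟩ ≤ GL(7, q)`. -/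
def ReeGroup (t : ℕ) : Subgroup (GL (Fin 7) F) :=
  Subgroup.closure {g : GL (Fin 7) F |
    (∃ x : F, (g : Matrix (Fin 7) (Fin 7) F) = amat t x) ∨
    (∃ x : F, (g : Matrix (Fin 7) (Fin 7) F) = bmat t x) ∨
    (∃ x : F, (g : Matrix (Fin 7) (Fin 7) F) = cmat t x) ∨
    (∃ l : Fˣ, (g : Matrix (Fin 7) (Fin 7) F) = hmat t l) ∨
    (g : Matrix (Fin 7) (Fin 7) F) = ups}

/-- The subgroup `U(q) = ⟨α(x), β(x), γ(x)⟩`. -/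
def Usub (t : ℕ) : Subgroup (GL (Fin 7) F) :=
  Subgroup.closure {g : GL (Fin 7) F |
    (∃ x : F, (g : Matrix (Fin 7) (Fin 7) F) = amat t x) ∨
    (∃ x : F, (g : Matrix (Fin 7) (Fin 7) F) = bmat t x) ∨
    (∃ x : F, (g : Matrix (Fin 7) (Fin 7) F) = cmat t x)}

/-- The subgroup `H(q) = {h(λ) : λ ∈ F_q^×}`. -/
def Hsub (t : ℕ) : Subgroup (GL (Fin 7) F) :=
  Subgroup.closure {g : GL (Fin 7) F |
    ∃ l : Fˣ, (g : Matrix (Fin 7) (Fin 7) F) = hmat t l}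

end ReePaper

open ReePaper

namespace ReePaper

lemma exists_ne_fixed_of_pow_prime_eq_one {G α : Type*} [Group G] [MulAction G α] [Finite α]
    {r : ℕ} (hr : r.Prime) (hr₂ : 2 < r) (hα : Nat.card α ≡ 2 [MOD r]) {c : G}
    (hc : c ^ r = 1) : ∃ x y : α, x ≠ y ∧ c • x = x ∧ c • y = y := by
  have : Fact r.Prime := ⟨hr⟩
  have hp : IsPGroup r (Subgroup.zpowers c) :=
    .of_card_dvd_pow (n := 1) (by simpa using orderOf_dvd_of_pow_eq_one hc)
  have hfix := (hp.card_modEq_card_fixedPoints α).symm.trans hα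
  have : 1 < Nat.card (MulAction.fixedPoints (Subgroup.zpowers c) α) := by
    by_contra! hle
    have := hfix.eq_of_lt_of_lt (by lia) hr₂
    lia
  obtain ⟨x, y, hxy⟩ := (Finite.one_lt_card_iff_nontrivial.1 this).exists_pair_ne
  let c' : Subgroup.zpowers c := ⟨c, Subgroup.mem_zpowers c⟩
  exact ⟨x, y, Subtype.coe_injective.ne hxy, x.2 c', y.2 c'⟩

lemma exists_prime_coprime_six_dvd_three_pow_sub_one {n : ℕ} (hn : Odd n) (hn₁ : n ≠ 1) :
    ∃ r, r.Prime ∧ r.Coprime 6 ∧ r ∣ 3 ^ n - 1 := by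
  obtain ⟨k, rfl⟩ := hn
  have h₉ : 9 ^ k % 4 = 1 := by simp [Nat.pow_mod]
  have hk : 9 ≤ 9 ^ k := Nat.le_self_pow (by lia) 9
  have hpow : 3 ^ (2 * k + 1) = 3 * 9 ^ k := by rw [pow_succ, pow_mul, mul_comm]; rfl
  set N := (3 ^ (2 * k + 1) - 1) / 2
  have hN : N % 6 = 1 := by lia
  have hN₁ : N ≠ 1 := by lia
  have hdvd : N ∣ 3 ^ (2 * k + 1) - 1 := ⟨2, by lia⟩
  have hcop : N.Coprime 6 := by rw [Nat.coprime_comm, Nat.Coprime, Nat.gcd_rec, hN]; rfl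
  exact ⟨N.minFac, Nat.minFac_prime hN₁, hcop.coprime_dvd_left N.minFac_dvd,
    N.minFac_dvd.trans hdvd⟩

lemma mulVec_single_of_commute_diagonal {n R : Type*} [Fintype n] [DecidableEq n] [CommRing R]
    [IsDomain R] {d : n → R} {M : Matrix n n R} (h : Commute M (diagonal d)) {j : n}
    (hj : ∀ i, i ≠ j → d i ≠ d j) : M *ᵥ Pi.single j 1 = Pi.single j (M j j) := by
  ext i
  have hij := congr_fun₂ h.eq i j
  rw [mul_diagonal, diagonal_mul, mul_comm] at hij
  obtain rfl | hne := eq_or_ne i j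
  · simp
  · simpa [hne] using (mul_eq_mul_right_iff.1 hij).resolve_left (hj i hne).symm

lemma funext_fin_seven_iff {α : Type*} {x y : Fin 7 → α} :
    x = y ↔ x 0 = y 0 ∧ x 1 = y 1 ∧ x 2 = y 2 ∧ x 3 = y 3 ∧ x 4 = y 4 ∧ x 5 = y 5 ∧ x 6 = y 6 := by
  simp [funext_iff, Fin.forall_fin_succ]

section Products

variable {K : Type*} [Field K]

/-- The product of trace-zero split octonions, followed by projection to trace zero. -/
def octCross (x y : Fin 7 → K) : Fin 7 → K :=
  ![(x 0 * y 3 - x 3 * y 0) + (x 1 * y 2 - x 2 * y 1),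
    (x 0 * y 4 - x 4 * y 0) - (x 1 * y 3 - x 3 * y 1),
    -(x 0 * y 5 - x 5 * y 0) - (x 2 * y 3 - x 3 * y 2),
    (x 0 * y 6 - x 6 * y 0) - (x 1 * y 5 - x 5 * y 1) - (x 2 * y 4 - x 4 * y 2),
    -(x 1 * y 6 - x 6 * y 1) - (x 3 * y 4 - x 4 * y 3),
    (x 2 * y 6 - x 6 * y 2) - (x 3 * y 5 - x 5 * y 3),
    (x 4 * y 5 - x 5 * y 4) + (x 3 * y 6 - x 6 * y 3)]

/-- Wilson's twisted product. In characteristic 3 the kernel of `octCross` on the exterior square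
has a quotient of dimension 7, and this is the quotient map in coordinates; it is meaningful only
for pairs with `octCross x y = 0`. -/
def twistedProduct (x y : Fin 7 → K) : Fin 7 → K :=
  ![x 0 * y 1 - x 1 * y 0,
    x 0 * y 2 - x 2 * y 0,
    -(x 1 * y 4 - x 4 * y 1),
    (x 1 * y 5 - x 5 * y 1) - (x 2 * y 4 - x 4 * y 2),
    -(x 2 * y 5 - x 5 * y 2),
    x 4 * y 6 - x 6 * y 4,
    x 5 * y 6 - x 6 * y 5]

lemma octCross_single_zero (a : K) (y : Fin 7 → K) :
    octCross (Pi.single 0 a) y = ![a * y 3, a * y 4, -(a * y 5), a * y 6, 0, 0, 0] := by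
  simp [octCross]

lemma octCross_single_six (a : K) (y : Fin 7 → K) :
    octCross (Pi.single 6 a) y = ![0, 0, 0, -(a * y 0), a * y 1, -(a * y 2), -(a * y 3)] := by
  simp [octCross]

lemma twistedProduct_single_zero (a : K) (y : Fin 7 → K) :
    twistedProduct (Pi.single 0 a) y = ![a * y 1, a * y 2, 0, 0, 0, 0, 0] := by
  simp [twistedProduct]

lemma twistedProduct_single_six (a : K) (y : Fin 7 → K) :
    twistedProduct (Pi.single 6 a) y = ![0, 0, 0, 0, 0, -(a * y 4), -(a * y 5)] := by
  simp [twistedProduct]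

/-- `M` preserves the cross product and intertwines the twisted product with `M'`, which plays the
role of the image of `M` under the exceptional isogeny of `G₂` in characteristic 3. -/
structure PreservesProducts (M M' : Matrix (Fin 7) (Fin 7) K) : Prop where
  cross : ∀ x y, octCross (M *ᵥ x) (M *ᵥ y) = M *ᵥ octCross x y
  twisted : ∀ x y, octCross x y = 0 →
    twistedProduct (M *ᵥ x) (M *ᵥ y) = M' *ᵥ twistedProduct x y

namespace PreservesProducts

lemma one : PreservesProducts (1 : Matrix (Fin 7) (Fin 7) K) 1 := by
  constructor <;> simp

lemma mul {M M' N N' : Matrix (Fin 7) (Fin 7) K} (hM : PreservesProducts M M')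
    (hN : PreservesProducts N N') : PreservesProducts (M * N) (M' * N') where
  cross x y := by simp only [← mulVec_mulVec, hM.cross, hN.cross]
  twisted x y hxy := by
    have hNxy : octCross (N *ᵥ x) (N *ᵥ y) = 0 := by rw [hN.cross, hxy, mulVec_zero]
    simp only [← mulVec_mulVec, hM.twisted _ _ hNxy, hN.twisted x y hxy]

lemma inv {g g' : GL (Fin 7) K} (h : PreservesProducts g.val g'.val) :
    PreservesProducts g⁻¹.val g'⁻¹.val := by
  have cancel (a : GL (Fin 7) K) (v : Fin 7 → K) : a.val *ᵥ (a⁻¹.val *ᵥ v) = v :=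
    smul_inv_smul a v
  have cross x y : octCross (g⁻¹.val *ᵥ x) (g⁻¹.val *ᵥ y) = g⁻¹.val *ᵥ octCross x y := by
    apply MulAction.injective g
    change g.val *ᵥ _ = g.val *ᵥ (g⁻¹.val *ᵥ _)
    rw [← h.cross, cancel, cancel, cancel]
  refine ⟨cross, fun x y hxy ↦ ?_⟩
  apply MulAction.injective g'
  change g'.val *ᵥ _ = g'.val *ᵥ (g'⁻¹.val *ᵥ _)
  rw [← h.twisted _ _ (by rw [cross, hxy, mulVec_zero]), cancel, cancel, cancel]

end PreservesProducts

/-- The elements of `GL(7, K)` compatible with both products, the twist being by `σ`. For a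
Tits endomorphism `σ` of a finite field this contains the Ree group. -/
def productStabilizer (σ : K →+* K) : Subgroup (GL (Fin 7) K) where
  carrier := {g | PreservesProducts g.val (g.val.map σ)}
  one_mem' := by simpa using PreservesProducts.one
  mul_mem' hg hh := by simpa [Matrix.map_mul] using hg.mul hh
  inv_mem' {g} hg := PreservesProducts.inv (g' := GeneralLinearGroup.map σ g) hg

lemma mem_productStabilizer {σ : K →+* K} {g : GL (Fin 7) K} :
    g ∈ productStabilizer σ ↔ PreservesProducts g.val (g.val.map σ) :=
  Iff.rfl

end Products

section Generators

variable {K : Type*} [Field K]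

/-- `α(x)` with `x ^ t` replaced by an independent variable: `amat t x = alphaMatrix x (x ^ t)`. -/
def alphaMatrix (x y : K) : Matrix (Fin 7) (Fin 7) K :=
  !![1, y, 0, 0, -(x * y ^ 3), -(x ^ 2 * y ^ 3), x ^ 2 * y ^ 4;
     0, 1, x, x * y, -(x * y ^ 2), 0, -(x ^ 2 * y ^ 3);
     0, 0, 1, y, -y ^ 2, 0, x * y ^ 3;
     0, 0, 0, 1, y, 0, 0;
     0, 0, 0, 0, 1, -x, x * y;
     0, 0, 0, 0, 0, 1, -y;
     0, 0, 0, 0, 0, 0, 1]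

/-- `β(x)` with `x ^ t` replaced by an independent variable: `bmat t x = betaMatrix x (x ^ t)`. -/
def betaMatrix (x y : K) : Matrix (Fin 7) (Fin 7) K :=
  !![1, 0, -y, 0, -x, 0, -(x * y);
     0, 1, 0, y, 0, -y ^ 2, 0;
     0, 0, 1, 0, 0, 0, x;
     0, 0, 0, 1, 0, y, 0;
     0, 0, 0, 0, 1, 0, y;
     0, 0, 0, 0, 0, 1, 0;
     0, 0, 0, 0, 0, 0, 1]

/-- `γ(x)` with `x ^ t` replaced by an independent variable: `cmat t x = gammaMatrix x (x ^ t)`. -/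
def gammaMatrix (x y : K) : Matrix (Fin 7) (Fin 7) K :=
  !![1, 0, 0, -y, 0, -x, -y ^ 2;
     0, 1, 0, 0, -y, 0, x;
     0, 0, 1, 0, 0, y, 0;
     0, 0, 0, 1, 0, 0, -y;
     0, 0, 0, 0, 1, 0, 0;
     0, 0, 0, 0, 0, 1, 0;
     0, 0, 0, 0, 0, 0, 1]

/-- The weights of the maximal torus of `G₂` on the trace-zero octonions. -/
def torusWeight (p q : K) : Fin 7 → K := ![p, q, p / q, 1, q / p, q⁻¹, p⁻¹]

lemma amat_eq_alphaMatrix (t : ℕ) (x : K) : amat t x = alphaMatrix x (x ^ t) := by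
  simp [amat, alphaMatrix, pow_add, pow_mul, mul_comm]

lemma bmat_eq_betaMatrix (t : ℕ) (x : K) : bmat t x = betaMatrix x (x ^ t) := by
  simp [bmat, betaMatrix, pow_add, pow_mul, mul_comm]

lemma cmat_eq_gammaMatrix (t : ℕ) (x : K) : cmat t x = gammaMatrix x (x ^ t) := by
  simp [cmat, gammaMatrix, pow_mul']

lemma hmat_eq_diagonal_torusWeight (t : ℕ) (l : Kˣ) :
    hmat t l = diagonal (torusWeight ((l : K) ^ t) (l / (l : K) ^ t)) := by
  have hl : (l : K) ≠ 0 := l.ne_zero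
  simp [hmat, torusWeight, zpow_sub₀ hl, zpow_add₀ hl, two_mul, div_div, div_div_eq_mul_div]

lemma alphaMatrix_map (f : K →+* K) (x y : K) :
    (alphaMatrix x y).map f = alphaMatrix (f x) (f y) := by
  ext i j
  fin_cases i <;> fin_cases j <;> simp [alphaMatrix]

lemma betaMatrix_map (f : K →+* K) (x y : K) :
    (betaMatrix x y).map f = betaMatrix (f x) (f y) := by
  ext i j
  fin_cases i <;> fin_cases j <;> simp [betaMatrix]

lemma gammaMatrix_map (f : K →+* K) (x y : K) :
    (gammaMatrix x y).map f = gammaMatrix (f x) (f y) := by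
  ext i j
  fin_cases i <;> fin_cases j <;> simp [gammaMatrix]

lemma ups_map (f : K →+* K) : (ups : Matrix (Fin 7) (Fin 7) K).map f = ups := by
  ext i j
  fin_cases i <;> fin_cases j <;> simp [ups]

lemma diagonal_torusWeight_map (f : K →+* K) (p q : K) :
    (diagonal (torusWeight p q)).map f = diagonal (torusWeight (f p) (f q)) := by
  rw [diagonal_map (map_zero f)]
  congr 1
  simp [funext_fin_seven_iff, torusWeight]

lemma alphaMatrix_mulVec (x y : K) (v : Fin 7 → K) : alphaMatrix x y *ᵥ v =
    ![v 0 + y * v 1 - x * y ^ 3 * v 4 - x ^ 2 * y ^ 3 * v 5 + x ^ 2 * y ^ 4 * v 6,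
      v 1 + x * v 2 + x * y * v 3 - x * y ^ 2 * v 4 - x ^ 2 * y ^ 3 * v 6,
      v 2 + y * v 3 - y ^ 2 * v 4 + x * y ^ 3 * v 6,
      v 3 + y * v 4,
      v 4 - x * v 5 + x * y * v 6,
      v 5 - y * v 6,
      v 6] := by
  simp [alphaMatrix, dotProduct, Fin.sum_univ_seven, sub_eq_add_neg]

lemma betaMatrix_mulVec (x y : K) (v : Fin 7 → K) : betaMatrix x y *ᵥ v =
    ![v 0 - y * v 2 - x * v 4 - x * y * v 6,
      v 1 + y * v 3 - y ^ 2 * v 5,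
      v 2 + x * v 6,
      v 3 + y * v 5,
      v 4 + y * v 6,
      v 5,
      v 6] := by
  simp [betaMatrix, dotProduct, Fin.sum_univ_seven, sub_eq_add_neg]

lemma gammaMatrix_mulVec (x y : K) (v : Fin 7 → K) : gammaMatrix x y *ᵥ v =
    ![v 0 - y * v 3 - x * v 5 - y ^ 2 * v 6,
      v 1 - y * v 4 + x * v 6,
      v 2 + y * v 5,
      v 3 - y * v 6,
      v 4,
      v 5,
      v 6] := by
  simp [gammaMatrix, dotProduct, Fin.sum_univ_seven, sub_eq_add_neg]

lemma ups_mulVec (v : Fin 7 → K) : ups *ᵥ v = -(v ∘ Fin.rev) := by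
  simp [ups, dotProduct, Fin.sum_univ_seven, funext_fin_seven_iff, Fin.rev]

lemma ups_mul_ups : (ups : Matrix (Fin 7) (Fin 7) K) * ups = 1 :=
  ext_of_mulVec_single fun i ↦ by
    rw [← mulVec_mulVec, ups_mulVec, ups_mulVec, one_mulVec]
    simp [funext_iff, Fin.rev_rev]

lemma isUnit_of_forall_mulVec_eq_zero {n : Type*} [Fintype n] [DecidableEq n] {M : Matrix n n K}
    (h : ∀ v, M *ᵥ v = 0 → v = 0) : IsUnit M := by
  rw [← mulVec_injective_iff_isUnit, ← coe_mulVecLin, injective_iff_map_eq_zero]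
  exact h

lemma isUnit_alphaMatrix (x y : K) : IsUnit (alphaMatrix x y) :=
  isUnit_of_forall_mulVec_eq_zero fun v hv ↦ by
    simp only [alphaMatrix_mulVec, funext_fin_seven_iff, cons_val, Pi.zero_apply] at hv ⊢
    grind

lemma isUnit_betaMatrix (x y : K) : IsUnit (betaMatrix x y) :=
  isUnit_of_forall_mulVec_eq_zero fun v hv ↦ by
    simp only [betaMatrix_mulVec, funext_fin_seven_iff, cons_val, Pi.zero_apply] at hv ⊢
    grind

lemma isUnit_gammaMatrix (x y : K) : IsUnit (gammaMatrix x y) :=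
  isUnit_of_forall_mulVec_eq_zero fun v hv ↦ by
    simp only [gammaMatrix_mulVec, funext_fin_seven_iff, cons_val, Pi.zero_apply] at hv ⊢
    grind

end Generators

section GeneratorsPreserve

variable {K : Type*} [Field K]

lemma preservesProducts_alphaMatrix [CharP K 3] (x y : K) :
    PreservesProducts (alphaMatrix x y) (alphaMatrix (y ^ 3) x) where
  cross v w := by
    simp only [alphaMatrix_mulVec, octCross, cons_val, funext_fin_seven_iff]
    refine ⟨?_, ?_, ?_, ?_, ?_, ?_, ?_⟩ <;> grind
  twisted v w h := by
    simp only [octCross, funext_fin_seven_iff, cons_val, Pi.zero_apply] at h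
    simp only [alphaMatrix_mulVec, twistedProduct, cons_val, funext_fin_seven_iff]
    refine ⟨?_, ?_, ?_, ?_, ?_, ?_, ?_⟩ <;> grind

lemma preservesProducts_betaMatrix [CharP K 3] (x y : K) :
    PreservesProducts (betaMatrix x y) (betaMatrix (y ^ 3) x) where
  cross v w := by
    simp only [betaMatrix_mulVec, octCross, cons_val, funext_fin_seven_iff]
    refine ⟨?_, ?_, ?_, ?_, ?_, ?_, ?_⟩ <;> grind
  twisted v w h := by
    simp only [octCross, funext_fin_seven_iff, cons_val, Pi.zero_apply] at h
    simp only [betaMatrix_mulVec, twistedProduct, cons_val, funext_fin_seven_iff]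
    refine ⟨?_, ?_, ?_, ?_, ?_, ?_, ?_⟩ <;> grind

lemma preservesProducts_gammaMatrix [CharP K 3] (x y : K) :
    PreservesProducts (gammaMatrix x y) (gammaMatrix (y ^ 3) x) where
  cross v w := by
    simp only [gammaMatrix_mulVec, octCross, cons_val, funext_fin_seven_iff]
    refine ⟨?_, ?_, ?_, ?_, ?_, ?_, ?_⟩ <;> grind
  twisted v w h := by
    simp only [octCross, funext_fin_seven_iff, cons_val, Pi.zero_apply] at h
    simp only [gammaMatrix_mulVec, twistedProduct, cons_val, funext_fin_seven_iff]
    refine ⟨?_, ?_, ?_, ?_, ?_, ?_, ?_⟩ <;> grind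

lemma preservesProducts_ups : PreservesProducts (ups : Matrix (Fin 7) (Fin 7) K) ups where
  cross v w := by
    simp only [ups_mulVec, octCross, cons_val, funext_fin_seven_iff, Pi.neg_apply,
      Function.comp_apply, Fin.reduceRev]
    refine ⟨?_, ?_, ?_, ?_, ?_, ?_, ?_⟩ <;> ring
  twisted v w h := by
    simp only [octCross, funext_fin_seven_iff, cons_val, Pi.zero_apply] at h
    simp only [ups_mulVec, twistedProduct, cons_val, funext_fin_seven_iff, Pi.neg_apply,
      Function.comp_apply, Fin.reduceRev]
    refine ⟨?_, ?_, ?_, ?_, ?_, ?_, ?_⟩ <;> grind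

lemma preservesProducts_diagonal_torusWeight {p q : K} (hp : p ≠ 0) (hq : q ≠ 0) :
    PreservesProducts (diagonal (torusWeight p q))
      (diagonal (torusWeight (p * q) (p ^ 2 / q))) where
  cross v w := by
    simp only [octCross, mulVec_diagonal, torusWeight, cons_val, funext_fin_seven_iff]
    refine ⟨?_, ?_, ?_, ?_, ?_, ?_, ?_⟩ <;> field_simp
  twisted v w _ := by
    simp only [twistedProduct, mulVec_diagonal, torusWeight, cons_val, funext_fin_seven_iff]
    refine ⟨?_, ?_, ?_, ?_, ?_, ?_, ?_⟩ <;> field_simp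

end GeneratorsPreserve

section TitsPair

variable {F : Type*} [Field F] {σ : F →+* F} {t : ℕ}

/-- `σ` is a Tits endomorphism, i.e. a square root of the Frobenius map in characteristic 3, with
inverse `x ↦ x ^ t`. -/
structure IsTitsPair (σ : F →+* F) (t : ℕ) : Prop where
  apply_pow : ∀ x, σ (x ^ t) = x
  apply_apply : ∀ x, σ (σ x) = x ^ 3

lemma IsTitsPair.apply_eq (h : IsTitsPair σ t) (x : F) : σ x = (x ^ t) ^ 3 := by
  rw [← h.apply_apply, h.apply_pow]

lemma IsTitsPair.pow_apply (h : IsTitsPair σ t) (x : F) : σ x ^ t = x :=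
  σ.injective (h.apply_pow (σ x))

lemma IsTitsPair.pow_injective (h : IsTitsPair σ t) : Function.Injective fun x : F ↦ x ^ t :=
  Function.LeftInverse.injective h.apply_pow

lemma isTitsPair_iterateFrobenius [Fintype F] [CharP F 3] {m : ℕ}
    (hF : Fintype.card F = 3 ^ (2 * m + 1)) :
    IsTitsPair (iterateFrobenius F 3 (m + 1)) (3 ^ m) where
  apply_pow x := by
    rw [iterateFrobenius_def, ← pow_mul, ← pow_add, ← add_assoc, ← two_mul, ← hF,
      FiniteField.pow_card]
  apply_apply x := by
    rw [iterateFrobenius_def, iterateFrobenius_def, ← pow_mul, ← pow_add,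
      show m + 1 + (m + 1) = 2 * m + 1 + 1 by ring, pow_succ 3, ← hF, pow_mul,
      FiniteField.pow_card]

lemma ReeGroup_le_productStabilizer [CharP F 3] (h : IsTitsPair σ t) :
    ReeGroup t ≤ productStabilizer σ := by
  refine (Subgroup.closure_le _).2 ?_
  rintro g (⟨x, hg⟩ | ⟨x, hg⟩ | ⟨x, hg⟩ | ⟨l, hg⟩ | hg) <;>
    rw [SetLike.mem_coe, mem_productStabilizer, hg]
  · rw [amat_eq_alphaMatrix, alphaMatrix_map, h.apply_pow, h.apply_eq]
    exact preservesProducts_alphaMatrix _ _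
  · rw [bmat_eq_betaMatrix, betaMatrix_map, h.apply_pow, h.apply_eq]
    exact preservesProducts_betaMatrix _ _
  · rw [cmat_eq_gammaMatrix, gammaMatrix_map, h.apply_pow, h.apply_eq]
    exact preservesProducts_gammaMatrix _ _
  · have hl : (l : F) ≠ 0 := l.ne_zero
    have hpq : (l : F) ^ t * (l / (l : F) ^ t) = l := by field_simp
    have hqp : ((l : F) ^ t) ^ 2 / (l / (l : F) ^ t) = σ l / l := by
      rw [h.apply_eq]
      field_simp
    rw [hmat_eq_diagonal_torusWeight, diagonal_torusWeight_map, map_div₀, h.apply_pow]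
    simpa only [hpq, hqp] using preservesProducts_diagonal_torusWeight (pow_ne_zero t hl)
      (div_ne_zero hl (pow_ne_zero t hl))
  · rw [ups_map]
    exact preservesProducts_ups

end TitsPair

section Ovoid

variable {F : Type*} [Field F] {σ : F →+* F}

/-- The vectors spanning the points of Wilson's ovoid, together with `0`. -/
def ovoidCone (σ : F →+* F) : Set (Fin 7 → F) :=
  {v | ∃ w, octCross v w = 0 ∧ twistedProduct v w = σ ∘ v}

lemma mulVec_mem_ovoidCone {g : GL (Fin 7) F} (hg : g ∈ productStabilizer σ) {v : Fin 7 → F}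
    (hv : v ∈ ovoidCone σ) : g.val *ᵥ v ∈ ovoidCone σ := by
  obtain ⟨w, hvw, hσ⟩ := hv
  refine ⟨g.val *ᵥ w, by rw [hg.cross, hvw, mulVec_zero], ?_⟩
  ext i
  rw [hg.twisted v w hvw, hσ, Function.comp_apply, RingHom.map_mulVec]

lemma single_zero_mem_ovoidCone : (Pi.single 0 1 : Fin 7 → F) ∈ ovoidCone σ :=
  ⟨Pi.single 1 1, by simp [octCross_single_zero],
    by simp [twistedProduct_single_zero, funext_fin_seven_iff]⟩

/-- The coordinates `v 5, …, v 1` are eliminated in this order: if `v i` were the last nonzero one,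
then `octCross v w = 0` and `v j = 0` for `j > i` would force `twistedProduct v w i = 0`. -/
lemma eq_single_zero_of_mem_ovoidCone {v : Fin 7 → F} (hv : v ∈ ovoidCone σ) (h₆ : v 6 = 0) :
    v = Pi.single 0 (v 0) := by
  obtain ⟨w, hvw, hσ⟩ := hv
  simp only [octCross, twistedProduct, funext_fin_seven_iff, cons_val, Pi.zero_apply,
    Function.comp_apply, h₆] at hvw hσ
  have eq_zero {a : F} (h : a ≠ 0 → σ a = 0) : a = 0 :=
    by_contra fun ha ↦ ha ((map_eq_zero σ).1 (h ha))
  have h₅ : v 5 = 0 := eq_zero fun h ↦ by grind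
  have h₄ : v 4 = 0 := eq_zero fun h ↦ by grind
  have h₃ : v 3 = 0 := eq_zero fun h ↦ by grind
  have h₂ : v 2 = 0 := eq_zero fun h ↦ by grind
  have h₁ : v 1 = 0 := eq_zero fun h ↦ by grind
  simp [funext_fin_seven_iff, h₁, h₂, h₃, h₄, h₅, h₆]

lemma eq_single_six_of_mem_ovoidCone {v : Fin 7 → F} (hv : v ∈ ovoidCone σ) (h₆ : v 6 ≠ 0)
    (h₅ : v 5 = 0) (h₄ : v 4 = 0) (h₃ : v 3 = 0) : v = Pi.single 6 (v 6) := by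
  obtain ⟨w, hvw, hσ⟩ := hv
  have hσ₆ : σ (v 6) ≠ 0 := (map_ne_zero σ).2 h₆
  simp only [octCross, twistedProduct, funext_fin_seven_iff, cons_val, Pi.zero_apply,
    Function.comp_apply, h₃, h₄, h₅, map_zero] at hvw hσ
  have h₂ : v 2 = 0 := by grind
  have h₁ : v 1 = 0 := by grind
  have h₀ : v 0 = 0 := (map_eq_zero σ).1 (by grind)
  simp [funext_fin_seven_iff, h₀, h₁, h₂, h₃, h₄, h₅]

end Ovoid

section RootElements

variable {F : Type*} [Field F]

lemma Smat_mulVec (t : ℕ) (a b c : F) (v : Fin 7 → F) : Smat t a b c *ᵥ v =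
    alphaMatrix a (a ^ t) *ᵥ betaMatrix b (b ^ t) *ᵥ gammaMatrix c (c ^ t) *ᵥ v := by
  rw [Smat, amat_eq_alphaMatrix, bmat_eq_betaMatrix, cmat_eq_gammaMatrix, ← mulVec_mulVec,
    ← mulVec_mulVec]

lemma Smat_mulVec_apply_six (t : ℕ) (a b c : F) (v : Fin 7 → F) :
    (Smat t a b c *ᵥ v) 6 = v 6 := by
  simp [Smat_mulVec, alphaMatrix_mulVec, betaMatrix_mulVec, gammaMatrix_mulVec]

lemma Smat_mulVec_apply_five (t : ℕ) (a b c : F) (v : Fin 7 → F) :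
    (Smat t a b c *ᵥ v) 5 = v 5 - a ^ t * v 6 := by
  simp [Smat_mulVec, alphaMatrix_mulVec, betaMatrix_mulVec, gammaMatrix_mulVec]

lemma Smat_mulVec_apply_four (t : ℕ) (a b c : F) (v : Fin 7 → F) :
    (Smat t a b c *ᵥ v) 4 = v 4 - a * v 5 + (b ^ t + a * a ^ t) * v 6 := by
  simp only [Smat_mulVec, alphaMatrix_mulVec, betaMatrix_mulVec, gammaMatrix_mulVec, cons_val]
  ring

lemma Smat_mulVec_apply_three (t : ℕ) (a b c : F) (v : Fin 7 → F) :
    (Smat t a b c *ᵥ v) 3 = v 3 + a ^ t * v 4 + b ^ t * v 5 + (a ^ t * b ^ t - c ^ t) * v 6 := by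
  simp only [Smat_mulVec, alphaMatrix_mulVec, betaMatrix_mulVec, gammaMatrix_mulVec, cons_val]
  ring

lemma Smat_mulVec_single_zero (t : ℕ) (a b c : F) :
    Smat t a b c *ᵥ Pi.single 0 1 = Pi.single 0 1 := by
  rw [Smat_mulVec, gammaMatrix_mulVec, betaMatrix_mulVec, alphaMatrix_mulVec]
  simp [funext_fin_seven_iff]

lemma exists_mem_ReeGroup_coe_eq_Smat (t : ℕ) (a b c : F) :
    ∃ g ∈ ReeGroup t, g.val = Smat t a b c := by
  obtain ⟨gα, hα⟩ := amat_eq_alphaMatrix t a ▸ isUnit_alphaMatrix a (a ^ t)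
  obtain ⟨gβ, hβ⟩ := bmat_eq_betaMatrix t b ▸ isUnit_betaMatrix b (b ^ t)
  obtain ⟨gγ, hγ⟩ := cmat_eq_gammaMatrix t c ▸ isUnit_gammaMatrix c (c ^ t)
  refine ⟨gα * gβ * gγ, mul_mem (mul_mem ?_ ?_) ?_, by simp [Smat, hα, hβ, hγ]⟩ <;>
    refine Subgroup.subset_closure ?_
  exacts [.inl ⟨a, hα⟩, .inr (.inl ⟨b, hβ⟩), .inr (.inr (.inl ⟨c, hγ⟩))]

lemma exists_mem_ReeGroup_coe_eq_ups (t : ℕ) :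
    ∃ g ∈ ReeGroup (F := F) t, g.val = ups :=
  ⟨⟨ups, ups, ups_mul_ups, ups_mul_ups⟩,
    Subgroup.subset_closure (.inr (.inr (.inr (.inr rfl)))), rfl⟩

lemma exists_Smat_mulVec_single_six [CharP F 3] {σ : F →+* F} {t : ℕ} (h : IsTitsPair σ t)
    {v : Fin 7 → F} (hv : v ∈ ovoidCone σ) (h₆ : v 6 ≠ 0) :
    ∃ a b c, Smat t a b c *ᵥ Pi.single 6 (v 6) = v := by
  obtain ⟨a, ha⟩ : ∃ a : F, a ^ t = -(v 5 / v 6) := ⟨_, h.pow_apply _⟩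
  obtain ⟨b, hb⟩ : ∃ b : F, b ^ t = v 4 / v 6 - a * a ^ t := ⟨_, h.pow_apply _⟩
  obtain ⟨c, hc⟩ : ∃ c : F, c ^ t = a ^ t * b ^ t - v 3 / v 6 := ⟨_, h.pow_apply _⟩
  obtain ⟨g, hg, hgS⟩ := exists_mem_ReeGroup_coe_eq_Smat t a b c
  set w := g⁻¹.val *ᵥ v
  have hw : w ∈ ovoidCone σ :=
    mulVec_mem_ovoidCone (ReeGroup_le_productStabilizer h (inv_mem hg)) hv
  have hSw : Smat t a b c *ᵥ w = v := by
    rw [← hgS]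
    exact smul_inv_smul g v
  have hw₆ : w 6 = v 6 := by rw [← hSw, Smat_mulVec_apply_six]
  have hw₅ : w 5 = 0 := by
    have := Smat_mulVec_apply_five t a b c w
    rw [hSw, hw₆, ha] at this
    grind
  have hw₄ : w 4 = 0 := by
    have := Smat_mulVec_apply_four t a b c w
    rw [hSw, hw₆, hw₅, hb] at this
    grind
  have hw₃ : w 3 = 0 := by
    have := Smat_mulVec_apply_three t a b c w
    rw [hSw, hw₆, hw₅, hw₄, hc] at this
    grind
  refine ⟨a, b, c, ?_⟩
  rw [← hw₆, ← eq_single_six_of_mem_ovoidCone hw (hw₆ ▸ h₆) hw₅ hw₄ hw₃, hSw]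

end RootElements

section Points

open scoped LinearAlgebra.Projectivization

variable {F : Type*} [Field F]

lemma smul_mk_eq_mk_iff {n : Type*} [Fintype n] [DecidableEq n] {g : GL n F} {v w : n → F}
    {hv : v ≠ 0} {hw : w ≠ 0} :
    g • Projectivization.mk F v hv = .mk F w hw ↔ ∃ k : F, k • w = g.val *ᵥ v :=
  Projectivization.mk_eq_mk_iff' ..

/-- The point at infinity of the ovoid, stabilised by the upper triangular matrices. -/
def pointInfty (F : Type*) [Field F] : ℙ F (Fin 7 → F) := .mk F (Pi.single 0 1) (by simp)

/-- The origin of the affine part of the ovoid, stabilised by the lower triangular matrices. -/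
def pointZero (F : Type*) [Field F] : ℙ F (Fin 7 → F) := .mk F (Pi.single 6 1) (by simp)

/-- The point `S(a, b, c) • pointZero` of the ovoid. -/
def affinePoint (t : ℕ) (s : F × F × F) : ℙ F (Fin 7 → F) :=
  .mk F (Smat t s.1 s.2.1 s.2.2 *ᵥ Pi.single 6 1) fun h ↦ by
    simpa [Smat_mulVec_apply_six] using congr_fun h 6

lemma affinePoint_injective {σ : F →+* F} {t : ℕ} (h : IsTitsPair σ t) :
    Function.Injective (affinePoint (F := F) t) := by
  rintro ⟨a, b, c⟩ ⟨a', b', c'⟩ habc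
  obtain ⟨k, hk⟩ := (Projectivization.mk_eq_mk_iff' ..).1 habc
  have h₆ := congr_fun hk 6
  have h₅ := congr_fun hk 5
  have h₄ := congr_fun hk 4
  have h₃ := congr_fun hk 3
  simp only [Pi.smul_apply, Smat_mulVec_apply_six, Smat_mulVec_apply_five,
    Smat_mulVec_apply_four, Smat_mulVec_apply_three, Pi.single_eq_same, smul_eq_mul, mul_one]
    at h₃ h₄ h₅ h₆
  subst h₆
  obtain rfl : a' = a := h.pow_injective (by simpa using h₅)
  obtain rfl : b' = b := h.pow_injective (by simpa using h₄)
  obtain rfl : c' = c := h.pow_injective (by simpa using h₃)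
  rfl

lemma pointInfty_notMem_range_affinePoint (t : ℕ) :
    pointInfty F ∉ Set.range (affinePoint t) := by
  rintro ⟨⟨a, b, c⟩, habc⟩
  obtain ⟨k, hk⟩ := (Projectivization.mk_eq_mk_iff' ..).1 habc
  simpa [Smat_mulVec_apply_six] using congr_fun hk 6

variable {t : ℕ}

lemma exists_mem_ReeGroup_smul_eq_affinePoint (s : F × F × F) :
    ∃ g ∈ ReeGroup (F := F) t,
      g • pointInfty F = pointInfty F ∧ g • pointZero F = affinePoint t s := by
  obtain ⟨g, hg, hgS⟩ := exists_mem_ReeGroup_coe_eq_Smat t s.1 s.2.1 s.2.2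
  refine ⟨g, hg, ?_, ?_⟩
  · exact smul_mk_eq_mk_iff.2 ⟨1, by rw [one_smul, hgS, Smat_mulVec_single_zero]⟩
  · exact smul_mk_eq_mk_iff.2 ⟨1, by rw [one_smul, hgS]⟩

lemma exists_mem_ReeGroup_swap :
    ∃ g ∈ ReeGroup (F := F) t, g • pointInfty F = pointZero F ∧ g • pointZero F = pointInfty F := by
  obtain ⟨g, hg, hgυ⟩ := exists_mem_ReeGroup_coe_eq_ups (F := F) t
  refine ⟨g, hg, ?_, ?_⟩ <;> refine smul_mk_eq_mk_iff.2 ⟨-1, ?_⟩ <;>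
    rw [hgυ, ups_mulVec] <;> simp [funext_fin_seven_iff]

/-- The affine part of the ovoid together with the point at infinity is a single orbit: the root
elements are transitive on the former, `Υ` swaps `pointZero` and `pointInfty`, and every point of
the orbit lies on the cone because the Ree group preserves both products. -/
lemma orbit_pointInfty [CharP F 3] {σ : F →+* F} (h : IsTitsPair σ t) :
    MulAction.orbit (ReeGroup (F := F) t) (pointInfty F) =
      insert (pointInfty F) (Set.range (affinePoint t)) := by
  ext P
  constructor
  · rintro ⟨g, rfl⟩
    have hv := mulVec_mem_ovoidCone (ReeGroup_le_productStabilizer h g.2) single_zero_mem_ovoidCone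
    set v := g.val.val *ᵥ Pi.single 0 1
    by_cases h₆ : v 6 = 0
    · exact .inl (smul_mk_eq_mk_iff.2 ⟨v 0, by
        rw [← Pi.single_smul, smul_eq_mul, mul_one, ← eq_single_zero_of_mem_ovoidCone hv h₆]⟩)
    · obtain ⟨a, b, c, habc⟩ := exists_Smat_mulVec_single_six h hv h₆
      exact .inr ⟨(a, b, c), (smul_mk_eq_mk_iff.2 ⟨v 6, by
        rw [← mulVec_smul, ← Pi.single_smul, smul_eq_mul, mul_one, habc]⟩).symm⟩
  · rintro (rfl | ⟨s, rfl⟩)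
    · exact MulAction.mem_orbit_self _
    · obtain ⟨u, hu, -, hus⟩ := exists_mem_ReeGroup_smul_eq_affinePoint (t := t) s
      obtain ⟨w, hw, hw', -⟩ := exists_mem_ReeGroup_swap (F := F) (t := t)
      exact ⟨⟨u * w, mul_mem hu hw⟩, by simp only [Subgroup.mk_smul, mul_smul, hw', hus]⟩

lemma card_orbit_pointInfty [Finite F] [CharP F 3] {σ : F →+* F} (h : IsTitsPair σ t) :
    Nat.card (MulAction.orbit (ReeGroup (F := F) t) (pointInfty F)) = Nat.card F ^ 3 + 1 := by
  rw [orbit_pointInfty h, Nat.card_coe_set_eq,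
    Set.ncard_insert_of_notMem (pointInfty_notMem_range_affinePoint t),
    ← Nat.card_coe_set_eq, Nat.card_range_of_injective (affinePoint_injective h), Nat.card_prod,
    Nat.card_prod]
  ring

lemma exists_mem_ReeGroup_smul_eq_of_ne [CharP F 3] {σ : F →+* F} (h : IsTitsPair σ t)
    {P Q : ℙ F (Fin 7 → F)} (hP : P ∈ MulAction.orbit (ReeGroup (F := F) t) (pointInfty F))
    (hQ : Q ∈ MulAction.orbit (ReeGroup (F := F) t) (pointInfty F)) (hPQ : P ≠ Q) :
    ∃ g ∈ ReeGroup (F := F) t, g • pointInfty F = P ∧ g • pointZero F = Q := by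
  obtain ⟨g, rfl⟩ := hP
  have hgQ : g⁻¹ • Q ∈ MulAction.orbit (ReeGroup (F := F) t) (pointInfty F) :=
    MulAction.mem_orbit_of_mem_orbit _ hQ
  rw [orbit_pointInfty h] at hgQ
  obtain hgQ | ⟨s, hs⟩ := hgQ
  · exact absurd (inv_smul_eq_iff.1 hgQ).symm hPQ
  · obtain ⟨u, hu, hu', hus⟩ := exists_mem_ReeGroup_smul_eq_affinePoint (t := t) s
    refine ⟨g * u, mul_mem g.2 hu, by rw [mul_smul, hu']; rfl, ?_⟩
    rw [mul_smul, hus, hs]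
    exact smul_inv_smul g Q

end Points

section TwoPointStabilizer

variable {F : Type*} [Field F] {M M' : Matrix (Fin 7) (Fin 7) F} {p n p' n' : F}

lemma exists_mulVec_single_one_eq (hM : PreservesProducts M M')
    (h₀ : M *ᵥ Pi.single 0 1 = Pi.single 0 p) (h₀' : M' *ᵥ Pi.single 0 1 = Pi.single 0 p')
    (h₆ : M *ᵥ Pi.single 6 1 = Pi.single 6 n) (hp : p ≠ 0) (hn : n ≠ 0) :
    ∃ q, p * q = p' ∧ M *ᵥ Pi.single 1 1 = Pi.single 1 q := by
  have cross₀₁ : octCross (Pi.single 0 1) (Pi.single 1 1) = (0 : Fin 7 → F) := by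
    simp [octCross_single_zero]
  have twist₀₁ : twistedProduct (Pi.single 0 1) (Pi.single 1 1) = (Pi.single 0 1 : Fin 7 → F) := by
    simp [twistedProduct_single_zero, funext_fin_seven_iff]
  have cross₆₁ : octCross (Pi.single 6 1) (octCross (Pi.single 6 1) (Pi.single 1 1)) =
      (0 : Fin 7 → F) := by
    simp [octCross_single_six]
  have h₀₁ := hM.cross (Pi.single 0 1) (Pi.single 1 1)
  have h₀₁' := hM.twisted _ _ cross₀₁
  have h₆₁ := hM.cross (Pi.single 6 1) (octCross (Pi.single 6 1) (Pi.single 1 1))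
  rw [cross₀₁, mulVec_zero, h₀, octCross_single_zero] at h₀₁
  rw [twist₀₁, h₀, h₀', twistedProduct_single_zero] at h₀₁'
  rw [cross₆₁, mulVec_zero, ← hM.cross, h₆, octCross_single_six, octCross_single_six] at h₆₁
  refine ⟨(M *ᵥ Pi.single 1 1) 1, by simpa using congr_fun h₀₁' 0, ?_⟩
  simp only [funext_fin_seven_iff, cons_val, Pi.zero_apply, Pi.single_apply] at h₀₁ h₀₁' h₆₁ ⊢
  grind

lemma exists_mulVec_single_five_eq (hM : PreservesProducts M M')
    (h₀ : M *ᵥ Pi.single 0 1 = Pi.single 0 p) (h₆ : M *ᵥ Pi.single 6 1 = Pi.single 6 n)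
    (h₆' : M' *ᵥ Pi.single 6 1 = Pi.single 6 n') (hp : p ≠ 0) (hn : n ≠ 0) :
    ∃ q, M *ᵥ Pi.single 5 1 = Pi.single 5 q := by
  have cross₆₅ : octCross (Pi.single 6 1) (Pi.single 5 1) = (0 : Fin 7 → F) := by
    simp [octCross_single_six]
  have twist₆₅ : twistedProduct (Pi.single 6 1) (Pi.single 5 1) = -(Pi.single 6 1 : Fin 7 → F) := by
    simp [twistedProduct_single_six, funext_fin_seven_iff]
  have cross₀₅ : octCross (Pi.single 0 1) (octCross (Pi.single 0 1) (Pi.single 5 1)) =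
      (0 : Fin 7 → F) := by
    simp [octCross_single_zero]
  have h₆₅ := hM.cross (Pi.single 6 1) (Pi.single 5 1)
  have h₆₅' := hM.twisted _ _ cross₆₅
  have h₀₅ := hM.cross (Pi.single 0 1) (octCross (Pi.single 0 1) (Pi.single 5 1))
  rw [cross₆₅, mulVec_zero, h₆, octCross_single_six] at h₆₅
  rw [twist₆₅, mulVec_neg, h₆, h₆', twistedProduct_single_six] at h₆₅'
  rw [cross₀₅, mulVec_zero, ← hM.cross, h₀, octCross_single_zero, octCross_single_zero] at h₀₅
  refine ⟨(M *ᵥ Pi.single 5 1) 5, ?_⟩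
  simp only [funext_fin_seven_iff, cons_val, Pi.zero_apply, Pi.neg_apply, Pi.single_apply]
    at h₆₅ h₆₅' h₀₅ ⊢
  grind

lemma PreservesProducts.mulVec_single_mul (hM : PreservesProducts M M') {i j k : Fin 7} {a b : F}
    (hijk : ∀ x y : F, octCross (Pi.single i x) (Pi.single j y) = Pi.single k (x * y))
    (hi : M *ᵥ Pi.single i 1 = Pi.single i a) (hj : M *ᵥ Pi.single j 1 = Pi.single j b) :
    M *ᵥ Pi.single k 1 = Pi.single k (a * b) := by
  rw [← mul_one 1, ← hijk, ← hM.cross, hi, hj, hijk]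

/-- The vectors fixed up to scalars by `h₀`, `h₆` generate all the coordinate axes: the two products
yield the axes `1` and `5`, and cross products of these four yield the remaining three. -/
lemma exists_eq_diagonal_torusWeight (hM : PreservesProducts M M')
    (h₀ : M *ᵥ Pi.single 0 1 = Pi.single 0 p) (h₀' : M' *ᵥ Pi.single 0 1 = Pi.single 0 p')
    (h₆ : M *ᵥ Pi.single 6 1 = Pi.single 6 n) (h₆' : M' *ᵥ Pi.single 6 1 = Pi.single 6 n')
    (hp : p ≠ 0) (hn : n ≠ 0) : ∃ q, p * q = p' ∧ M = diagonal (torusWeight p q) := by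
  obtain ⟨q, hpq, h₁⟩ := exists_mulVec_single_one_eq hM h₀ h₀' h₆ hp hn
  obtain ⟨r, h₅⟩ := exists_mulVec_single_five_eq hM h₀ h₆ h₆' hp hn
  have h₃ := hM.mulVec_single_mul (i := 0) (j := 6) (k := 3)
    (fun x y ↦ by simp [octCross_single_zero, funext_fin_seven_iff]) h₀ h₆
  have h₄ := hM.mulVec_single_mul (i := 6) (j := 1) (k := 4)
    (fun x y ↦ by simp [octCross_single_six, funext_fin_seven_iff]) h₆ h₁
  have h₂ := hM.mulVec_single_mul (i := 5) (j := 0) (k := 2)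
    (fun x y ↦ by simp [octCross, funext_fin_seven_iff]) h₅ h₀
  have h₀₃ := hM.mulVec_single_mul (i := 0) (j := 3) (k := 0)
    (fun x y ↦ by simp [octCross_single_zero, funext_fin_seven_iff]) h₀ h₃
  have h₄₂ := hM.mulVec_single_mul (i := 4) (j := 2) (k := 3)
    (fun x y ↦ by simp [octCross, funext_fin_seven_iff]) h₄ h₂
  have hpn : p * n = 1 := by
    rw [h₀, Pi.single_inj] at h₀₃
    grind
  have hqr : q * r = 1 := by
    rw [h₃, Pi.single_inj] at h₄₂
    grind
  obtain rfl : n = p⁻¹ := eq_inv_of_mul_eq_one_right hpn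
  obtain rfl : r = q⁻¹ := eq_inv_of_mul_eq_one_right hqr
  refine ⟨q, hpq, ext_of_mulVec_single fun i ↦ ?_⟩
  rw [diagonal_mulVec_single]
  fin_cases i <;>
    simp [torusWeight, div_eq_mul_inv, mul_comm, hp, h₀, h₁, h₂, h₃, h₄, h₅, h₆]

end TwoPointStabilizer

section Torus

open scoped LinearAlgebra.Projectivization

variable {F : Type*} [Field F] {σ : F →+* F}

/-- The homomorphism `λ ↦ h(λ)`. -/
def torusHom (t : ℕ) : Fˣ →* GL (Fin 7) F :=
  MonoidHom.toHomUnits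
    { toFun := hmat t
      map_one' := by simp [hmat, funext_fin_seven_iff]
      map_mul' := fun k l ↦ by
        rw [hmat, hmat, hmat, diagonal_mul_diagonal]
        congr 1
        simp [funext_fin_seven_iff, mul_zpow, mul_pow, mul_comm] }

variable {t : ℕ}

lemma Hsub_eq_range_torusHom : Hsub t = (torusHom (F := F) t).range := by
  rw [Hsub, ← Subgroup.closure_eq (torusHom t).range]
  congr 1
  ext g
  exact exists_congr fun l ↦ by rw [eq_comm, Units.ext_iff]; rfl

lemma card_Hsub_le [Finite F] : Nat.card (Hsub (F := F) t) ≤ Nat.card F - 1 := by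
  rw [Hsub_eq_range_torusHom, ← Nat.card_units]
  exact Nat.le_of_dvd Nat.card_pos (Subgroup.card_range_dvd _)

lemma exists_eq_diagonal_torusWeight_of_smul_eq {g : GL (Fin 7) F}
    (hg : g ∈ productStabilizer σ) (h₀ : g • pointInfty F = pointInfty F)
    (h₆ : g • pointZero F = pointZero F) :
    ∃ p q, p * q = σ p ∧ p ≠ 0 ∧ g.val = diagonal (torusWeight p q) := by
  have exists_eq_single (i : Fin 7) (h : ∃ k : F, k • Pi.single i 1 = g.val *ᵥ Pi.single i 1) :
      ∃ k, g.val *ᵥ Pi.single i 1 = Pi.single i k ∧ k ≠ 0 := by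
    obtain ⟨k, hk⟩ := h
    rw [← Pi.single_smul, smul_eq_mul, mul_one, eq_comm] at hk
    refine ⟨k, hk, ?_⟩
    rintro rfl
    rw [Pi.single_zero, ← mulVec_zero g.val] at hk
    simpa using MulAction.injective g hk
  have map_mulVec_single {i : Fin 7} {k : F} (h : g.val *ᵥ Pi.single i 1 = Pi.single i k) :
      g.val.map σ *ᵥ Pi.single i 1 = Pi.single i (σ k) := by
    ext j
    rw [← Pi.apply_single (fun _ ↦ σ) (fun _ ↦ map_zero σ), ← h]
    simp
  obtain ⟨p, hp, hp₀⟩ := exists_eq_single 0 (smul_mk_eq_mk_iff.1 h₀)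
  obtain ⟨n, hn, hn₀⟩ := exists_eq_single 6 (smul_mk_eq_mk_iff.1 h₆)
  obtain ⟨q, hpq, hgd⟩ := exists_eq_diagonal_torusWeight hg hp (map_mulVec_single hp) hn
    (map_mulVec_single hn) hp₀ hn₀
  exact ⟨p, q, hpq, hp₀, hgd⟩

lemma mem_Hsub_of_smul_eq (h : IsTitsPair σ t) {g : GL (Fin 7) F}
    (hg : g ∈ productStabilizer σ) (h₀ : g • pointInfty F = pointInfty F)
    (h₆ : g • pointZero F = pointZero F) : g ∈ Hsub t := by
  obtain ⟨p, q, hpq, hp, hgd⟩ := exists_eq_diagonal_torusWeight_of_smul_eq hg h₀ h₆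
  refine Subgroup.subset_closure ⟨.mk0 (σ p) ((map_ne_zero σ).2 hp), ?_⟩
  rw [hgd, hmat_eq_diagonal_torusWeight, Units.val_mk0, h.pow_apply, ← hpq,
    mul_div_cancel_left₀ q hp]

lemma torusWeight_rev (p q : F) (i : Fin 7) : torusWeight p q i.rev = (torusWeight p q i)⁻¹ := by
  fin_cases i <;> simp [torusWeight, Fin.rev]

/-- If `q = p ^ k` then `σ p = p ^ (k + 1)`, so `σ ∘ σ = (· ^ 3)` forces
`p ^ ((k + 1) ^ 2 - 3) = 1`. -/
lemma ne_zpow_of_pow_six_ne_one (hσ : ∀ x, σ (σ x) = x ^ 3) {p q : F} (hp : p ≠ 0)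
    (hpq : p * q = σ p) (hp₆ : p ^ 6 ≠ 1) {k : ℤ} (hk : (k + 1) ^ 2 - 3 ∣ 6) : q ≠ p ^ k := by
  rintro rfl
  have hσp : σ p = p ^ (k + 1) := by rw [← hpq, zpow_add_one₀ hp, mul_comm]
  have hpow : p ^ ((k + 1) ^ 2) = p ^ (3 : ℤ) := by
    rw [sq, _root_.zpow_mul, ← hσp, ← map_zpow₀, ← hσp, hσ, ← zpow_natCast, Nat.cast_ofNat]
  have hone : p ^ ((k + 1) ^ 2 - 3) = 1 := by
    rw [zpow_sub₀ hp, hpow, div_self (zpow_ne_zero 3 hp)]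
  obtain ⟨l, hl⟩ := hk
  apply hp₆
  rw [← zpow_natCast, Nat.cast_ofNat, hl, _root_.zpow_mul, hone, _root_.one_zpow]

lemma torusWeight_ne_torusWeight_zero (hσ : ∀ x, σ (σ x) = x ^ 3) {p q : F} (hp : p ≠ 0)
    (hpq : p * q = σ p) (hp₆ : p ^ 6 ≠ 1) {i : Fin 7} (hi : i ≠ 0) :
    torusWeight p q i ≠ torusWeight p q 0 := by
  have hq {k : ℤ} (hk : (k + 1) ^ 2 - 3 ∣ 6) : q ≠ p ^ k :=
    ne_zpow_of_pow_six_ne_one hσ hp hpq hp₆ hk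
  have hq₁ : q ≠ p := by simpa using hq (k := 1) (by norm_num)
  have hq₀ : q ≠ 1 := by simpa using hq (k := 0) (by norm_num)
  have hq₂ : q ≠ p ^ 2 := by exact_mod_cast hq (k := 2) (by norm_num)
  have hq_inv : q ≠ p⁻¹ := by simpa using hq (k := -1) (by norm_num)
  have hp₁ : p ≠ 1 := by
    rintro rfl
    exact hp₆ (one_pow 6)
  have hp_inv : p⁻¹ ≠ p := fun h ↦ hp₆ (by grind)
  have : q ≠ 0 := right_ne_zero_of_mul (hpq ▸ (map_ne_zero σ).2 hp)
  fin_cases i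
  · exact absurd rfl hi
  all_goals
    simp only [torusWeight, cons_val, Fin.mk_one, Fin.reduceFinMk]
    grind

lemma torusWeight_ne_torusWeight_six (hσ : ∀ x, σ (σ x) = x ^ 3) {p q : F} (hp : p ≠ 0)
    (hpq : p * q = σ p) (hp₆ : p ^ 6 ≠ 1) {i : Fin 7} (hi : i ≠ 6) :
    torusWeight p q i ≠ torusWeight p q 6 := by
  have h := torusWeight_ne_torusWeight_zero hσ hp hpq hp₆ fun h ↦ hi (Fin.rev_eq_iff.1 h)
  rwa [torusWeight_rev, show (0 : Fin 7) = Fin.rev 6 from rfl, torusWeight_rev, ne_eq,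
    _root_.inv_inj] at h

end Torus

section Main

open scoped LinearAlgebra.Projectivization

variable {F : Type*} [Field F] {σ : F →+* F} {t : ℕ}

lemma smul_eq_of_commute_diagonal {g c : GL (Fin 7) F} (hcomm : Commute g c)
    {d : Fin 7 → F} (hc : c.val = diagonal d) {j : Fin 7} (hd : ∀ i, i ≠ j → d i ≠ d j)
    {P : ℙ F (Fin 7 → F)} {hj} (hP : P = .mk F (Pi.single j 1) hj) : g • P = P := by
  subst hP
  refine smul_mk_eq_mk_iff.2 ⟨g.val j j, ?_⟩
  rw [← Pi.single_smul, smul_eq_mul, mul_one,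
    mulVec_single_of_commute_diagonal (hc ▸ hcomm.map (Units.coeHom _)) hd]

/-- The extreme eigenvalues of `c` are simple, so its centraliser fixes both points as well. -/
lemma centralizer_le_Hsub (h : IsTitsPair σ t) {c : GL (Fin 7) F} {r : ℕ}
    (hr : r.Coprime 6) (hcr : c ^ r = 1) (hc₁ : c ≠ 1) (hc : c ∈ productStabilizer σ)
    (h₀ : c • pointInfty F = pointInfty F) (h₆ : c • pointZero F = pointZero F) :
    productStabilizer σ ⊓ Subgroup.centralizer {c} ≤ Hsub t := by
  obtain ⟨p, q, hpq, hp, hcd⟩ := exists_eq_diagonal_torusWeight_of_smul_eq hc h₀ h₆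
  have hp₆ : p ^ 6 ≠ 1 := by
    intro hp₆
    have hpr : p ^ r = 1 := by
      have := congr_arg (fun g : GL (Fin 7) F ↦ g.val 0 0) hcr
      simpa [hcd, diagonal_pow, torusWeight] using this
    obtain rfl : p = 1 := by simpa [hr.gcd_eq_one] using pow_gcd_eq_one.2 ⟨hpr, hp₆⟩
    obtain rfl : q = 1 := by simpa using hpq
    exact hc₁ (Units.ext (hcd.trans (by simp [torusWeight, diagonal_eq_one, funext_fin_seven_iff])))
  rintro g ⟨hg, hgc⟩
  have hcomm : Commute g c := Subgroup.mem_centralizer_singleton_iff.1 hgc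
  exact mem_Hsub_of_smul_eq h hg
    (smul_eq_of_commute_diagonal hcomm hcd
      (fun i ↦ torusWeight_ne_torusWeight_zero h.apply_apply hp hpq hp₆) rfl)
    (smul_eq_of_commute_diagonal hcomm hcd
      (fun i ↦ torusWeight_ne_torusWeight_six h.apply_apply hp hpq hp₆) rfl)

lemma exists_mem_ReeGroup_smul_smul_eq [Finite F] [CharP F 3] (h : IsTitsPair σ t) {r : ℕ}
    (hr : r.Prime) (hr₂ : 2 < r) (hrF : r ∣ Nat.card F - 1) {c : GL (Fin 7) F}
    (hc : c ∈ ReeGroup t) (hcr : c ^ r = 1) :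
    ∃ g ∈ ReeGroup (F := F) t, c • g • pointInfty F = g • pointInfty F ∧
      c • g • pointZero F = g • pointZero F := by
  have hcard : Nat.card (MulAction.orbit (ReeGroup (F := F) t) (pointInfty F)) ≡ 2 [MOD r] := by
    rw [card_orbit_pointInfty h]
    simpa using (((Nat.modEq_iff_dvd' Nat.card_pos).2 hrF).symm.pow 3).add_right 1
  obtain ⟨⟨P, hP⟩, ⟨Q, hQ⟩, hPQ, hcP, hcQ⟩ := exists_ne_fixed_of_pow_prime_eq_one hr hr₂ hcard
    (c := (⟨c, hc⟩ : ReeGroup (F := F) t)) (Subtype.ext hcr)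
  obtain ⟨g, hg, rfl, rfl⟩ := exists_mem_ReeGroup_smul_eq_of_ne h hP hQ (by simpa using hPQ)
  exact ⟨g, hg, congr_arg Subtype.val hcP, congr_arg Subtype.val hcQ⟩

lemma exists_map_conj_centralizer_le_Hsub [Finite F] [CharP F 3] (h : IsTitsPair σ t) {r : ℕ}
    (hr : r.Prime) (hr₆ : r.Coprime 6) (hrF : r ∣ Nat.card F - 1) {c : GL (Fin 7) F}
    (hc : c ∈ ReeGroup t) (hcr : orderOf c = r) :
    ∃ g ∈ ReeGroup t,
      (ReeGroup t ⊓ Subgroup.centralizer {c}).map (MulAut.conj g).toMonoidHom ≤ Hsub t := by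
  have hr₂ : 2 < r := by
    refine hr.two_le.lt_of_ne ?_
    rintro rfl
    norm_num at hr₆
  have hc₁ : c ≠ 1 := fun hc₁ ↦ hr.ne_one (by rw [← hcr, hc₁, orderOf_one])
  have hc_pow : c ^ r = 1 := hcr ▸ pow_orderOf_eq_one c
  obtain ⟨g, hg, hg₀, hg₆⟩ := exists_mem_ReeGroup_smul_smul_eq h hr hr₂ hrF hc hc_pow
  refine ⟨g⁻¹, inv_mem hg, ?_⟩
  have conj_mem {x : GL (Fin 7) F} (hx : x ∈ ReeGroup t) :
      MulAut.conj g⁻¹ x ∈ productStabilizer σ :=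
    ReeGroup_le_productStabilizer h (by simpa using mul_mem (mul_mem (inv_mem hg) hx) hg)
  have conj_fixes {R : ℙ F (Fin 7 → F)} (hR : c • g • R = g • R) : MulAut.conj g⁻¹ c • R = R := by
    rw [MulAut.conj_apply, inv_inv, mul_smul, mul_smul, hR, inv_smul_smul]
  rintro _ ⟨x, ⟨hx, hxc⟩, rfl⟩
  have hcomm : Commute x c := Subgroup.mem_centralizer_singleton_iff.1 hxc
  exact centralizer_le_Hsub h hr₆ (by rw [← map_pow, hc_pow, map_one])
    (EmbeddingLike.map_ne_one_iff.2 hc₁) (conj_mem hc) (conj_fixes hg₀) (conj_fixes hg₆)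
    ⟨conj_mem hx, Subgroup.mem_centralizer_singleton_iff.2 (hcomm.map (MulAut.conj g⁻¹)).eq⟩

end Main

end ReePaper

theorem cyclic_conjugate_to_h_general (m : ℕ) (hm : 0 < m) (F : Type*) [Field F] [Fintype F]
    (hF : Fintype.card F = 3 ^ (2 * m + 1)) (C : Subgroup (GL (Fin 7) F))
    (hC : C ≤ ReeGroup (3 ^ m)) [IsMulCommutative C]
    (hcard : Nat.card C = 3 ^ (2 * m + 1) - 1) :
    ∃ g ∈ ReeGroup (F := F) (3 ^ m),
      C.map (MulAut.conj g).toMonoidHom = Hsub (F := F) (3 ^ m) := by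
  have : Fact (Nat.Prime 3) := ⟨Nat.prime_three⟩
  have : CharP F 3 := charP_of_card_eq_prime_pow hF
  obtain ⟨r, hr, hr₆, hrC⟩ := exists_prime_coprime_six_dvd_three_pow_sub_one
    (odd_two_mul_add_one m) (by lia)
  have : Fact r.Prime := ⟨hr⟩
  have hFr : r ∣ Nat.card F - 1 := by rwa [Nat.card_eq_fintype_card, hF]
  obtain ⟨c, hcr⟩ := exists_prime_orderOf_dvd_card' (G := C) r (hcard ▸ hrC)
  obtain ⟨g, hg, hle⟩ := exists_map_conj_centralizer_le_Hsub (isTitsPair_iterateFrobenius hF)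
    hr hr₆ hFr (hC c.2) ((Subgroup.orderOf_coe c).trans hcr)
  have hCc : C ≤ ReeGroup (3 ^ m) ⊓ Subgroup.centralizer {c.val} :=
    le_inf hC fun x hx ↦ Subgroup.mem_centralizer_singleton_iff.2
      (congr_arg Subtype.val (mul_comm' (⟨x, hx⟩ : C) c))
  refine ⟨g, hg, Subgroup.eq_of_le_of_card_ge ((Subgroup.map_mono hCc).trans hle) ?_⟩
  rw [Subgroup.card_map_of_injective (MulAut.conj g).injective, hcard, ← hF,
    ← Nat.card_eq_fintype_card]
  exact card_Hsub_le

/-- Every cyclic subgroup of `Ree(q)` of order `q - 1` is conjugate in `Ree(q)` to `H(q)`. -/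
theorem cyclic_conjugate_to_h (m : ℕ) (hm : 0 < m) (F : Type*) [Field F] [Fintype F]
    (hF : Fintype.card F = 3 ^ (2 * m + 1)) :
    ∀ C : Subgroup (GL (Fin 7) F), C ≤ ReeGroup (F := F) (3 ^ m) → IsCyclic ↥C →
      Nat.card ↥C = 3 ^ (2 * m + 1) - 1 →
      ∃ g ∈ ReeGroup (F := F) (3 ^ m),
        C.map (MulAut.conj g).toMonoidHom = Hsub (F := F) (3 ^ m) := by
  intro C hC _ hcard
  exact cyclic_conjugate_to_h_general m hm F hF C hC hcard
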